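/- arXiv:1103.6015 — 3 statements merged into one kernel-verified Lean document; each statement's English description precedes it below -/
import Mathlib

section
/- Let d₁, d₂, m ≥ 1 and n = d₁ + d₂ + m; write points of ℝⁿ as x = (x′, x″, x‴) ∈ ℝ^{d₁} × ℝ^{d₂} × ℝ^{m}. Suppose y, ν, ω ∈ ℝⁿ and ȳ, ν̄, ω̄ ∈ ℝⁿ satisfy: y′ = 0; ν = (ν′, 0, 0) with ν ≠ 0; |ω| = 1 and ν·ω ≠ 0; ȳ′ = 0 and ȳ″ = 0; ν̄ = (ν̄′, ν̄″, 0) with ν̄ ≠ 0; |ω̄| = 1 and ν̄·ω̄ ≠ 0; and let r, r̄ ∈ ℝ. Set σ = |ν|²/(2ν·ω) and σ̄ = |ν̄|²/(2ν̄·ω̄). If (y − r(ν − σω), y·ω + r, ω, ν − σω, σ, −σ(y − (y·ω)ω)) = (ȳ − r̄(ν̄ − σ̄ω̄), ȳ·ω̄ + r̄, ω̄, ν̄ − σ̄ω̄, σ̄, −σ̄(ȳ − (ȳ·ω̄)ω̄)), then ω = ω̄, σ = σ̄, ν = ν̄ (in particular the ℝ^{d₂}-component of ν̄ vanishes), y =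 ȳ (in particular the ℝ^{d₂}-component of y vanishes), and r = r̄. -/
open scoped RealInnerProductSpace

/-- In the flat nested model, a point of the flowout Lagrangian `Λ^a_{1+}` can equal a
point of `Λ^c_{2+}` only when all the parameters coincide. -/
theorem stmt3 (d₁ d₂ m : ℕ) (hd₁ : 1 ≤ d₁) (hd₂ : 1 ≤ d₂) (hm : 1 ≤ m)
    (n : ℕ) (hn : n = d₁ + d₂ + m)
    (y ν ω ybar νbar ωbar : EuclideanSpace ℝ (Fin n))
    (hy : ∀ i : Fin n, (i : ℕ) < d₁ → y i = 0)
    (hν : ∀ i : Fin n, d₁ ≤ (i : ℕ) → ν i = 0)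
    (hνne : ν ≠ 0)
    (hω : ‖ω‖ = 1) (hνω : ⟪ν, ω⟫ ≠ 0)
    (hybar : ∀ i : Fin n, (i : ℕ) < d₁ + d₂ → ybar i = 0)
    (hνbar : ∀ i : Fin n, d₁ + d₂ ≤ (i : ℕ) → νbar i = 0)
    (hνbarne : νbar ≠ 0)
    (hωbar : ‖ωbar‖ = 1) (hνωbar : ⟪νbar, ωbar⟫ ≠ 0)
    (r rbar σ σbar : ℝ)
    (hσ : σ = ‖ν‖ ^ 2 / (2 * ⟪ν, ω⟫))
    (hσbar : σbar = ‖νbar‖ ^ 2 / (2 * ⟪νbar, ωbar⟫))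
    (h1 : y - r • (ν - σ • ω) = ybar - rbar • (νbar - σbar • ωbar))
    (h2 : ⟪y, ω⟫ + r = ⟪ybar, ωbar⟫ + rbar)
    (h3 : ω = ωbar)
    (h4 : ν - σ • ω = νbar - σbar • ωbar)
    (h5 : σ = σbar)
    (h6 : (-σ) • (y - ⟪y, ω⟫ • ω) = (-σbar) • (ybar - ⟪ybar, ωbar⟫ • ωbar)) :
    ω = ωbar ∧ σ = σbar ∧ ν = νbar ∧ y = ybar ∧ r = rbar ∧
    (∀ i : Fin n, d₁ ≤ (i : ℕ) → νbar i = 0) ∧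
    (∀ i : Fin n, (i : ℕ) < d₁ + d₂ → y i = 0) := by
  subst h3
  subst h5
  have hνν : ν = νbar := sub_left_injective h4
  subst hνν
  have hσ0 : σ ≠ 0 := by
    rw [hσ]
    exact div_ne_zero (pow_ne_zero 2 (norm_ne_zero_iff.mpr hνne)) (mul_ne_zero two_ne_zero hνω)
  have h6' := smul_right_injective _ (neg_ne_zero.mpr hσ0) h6
  have hdiff : y - ybar = (rbar - r) • ω := by
    have e : rbar - r = ⟪y, ω⟫ - ⟪ybar, ω⟫ := by linarith
    rw [e, sub_smul, sub_eq_sub_iff_sub_eq_sub.mp h6']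
  have horth : ⟪ν, y - ybar⟫ = 0 := by
    rw [PiLp.inner_apply]
    refine Finset.sum_eq_zero fun i _ => ?_
    by_cases hi : (i : ℕ) < d₁
    · simp [hy i hi, hybar i (by omega)]
    · simp [hν i (by omega)]
  rw [hdiff, inner_smul_right] at horth
  have hr0 : rbar - r = 0 := (mul_eq_zero.mp horth).resolve_right hνω
  have hyy : y = ybar := by
    rw [hr0, zero_smul] at hdiff
    exact sub_eq_zero.mp hdiff
  refine ⟨rfl, rfl, rfl, hyy, by linarith, hν, ?_⟩
  rw [hyy]
  exact hybar
end

section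
/- Let n ≥ 1 and let D = {(y,ν,ω) ∈ ℝⁿ × ℝⁿ × ℝⁿ : |ω| = 1 and ν·ω ≠ 0}. For (y,ν,ω) ∈ D set σ = |ν|²/(2ν·ω) and define Ψ(y,ν,ω) = (−y·((ν − σω)/σ + ω), −(ν − σω)/σ, ω, σ, σ·(y − (y·ω)ω)) ∈ ℝ × ℝⁿ × ℝⁿ × ℝ × ℝⁿ. Then Ψ is injective on D: if Ψ(y,ν,ω) = Ψ(ȳ,ν̄,ω̄), then y = ȳ, ν = ν̄, and ω = ω̄. -/
open scoped RealInnerProductSpace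

/-- The parametrization `Ψ` of the reflected Lagrangian is injective on the set
`D = {(y,ν,ω) : |ω| = 1, ν·ω ≠ 0}`. -/
theorem stmt5 (n : ℕ) (hn : 1 ≤ n)
    (y ν ω ybar νbar ωbar : EuclideanSpace ℝ (Fin n))
    (hω : ‖ω‖ = 1) (hνω : ⟪ν, ω⟫ ≠ 0)
    (hωbar : ‖ωbar‖ = 1) (hνωbar : ⟪νbar, ωbar⟫ ≠ 0)
    (σ σbar : ℝ)
    (hσ : σ = ‖ν‖ ^ 2 / (2 * ⟪ν, ω⟫))
    (hσbar : σbar = ‖νbar‖ ^ 2 / (2 * ⟪νbar, ωbar⟫))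
    (h1 : -⟪y, σ⁻¹ • (ν - σ • ω) + ω⟫ = -⟪ybar, σbar⁻¹ • (νbar - σbar • ωbar) + ωbar⟫)
    (h2 : -(σ⁻¹ • (ν - σ • ω)) = -(σbar⁻¹ • (νbar - σbar • ωbar)))
    (h3 : ω = ωbar)
    (h4 : σ = σbar)
    (h5 : σ • (y - ⟪y, ω⟫ • ω) = σbar • (ybar - ⟪ybar, ωbar⟫ • ωbar)) :
    y = ybar ∧ ν = νbar ∧ ω = ωbar := by
  subst h3
  subst h4
  have hν0 : ν ≠ 0 := by
    rintro rfl
    simp at hνω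
  have hs : σ ≠ 0 := by
    rw [hσ]
    exact div_ne_zero (pow_ne_zero 2 (norm_ne_zero_iff.mpr hν0)) (mul_ne_zero two_ne_zero hνω)
  have hν : ν = νbar := by
    have h := smul_right_injective _ (inv_ne_zero hs) (neg_injective h2)
    exact sub_left_injective h
  subst hν
  have e : σ⁻¹ • (ν - σ • ω) + ω = σ⁻¹ • ν := by
    rw [smul_sub, inv_smul_smul₀ hs, sub_add_cancel]
  rw [e, inner_smul_right, inner_smul_right] at h1
  have hy : ⟪y, ν⟫ = ⟪ybar, ν⟫ := mul_left_cancel₀ (inv_ne_zero hs) (neg_injective h1)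
  have h6 : y - ⟪y, ω⟫ • ω = ybar - ⟪ybar, ω⟫ • ω := smul_right_injective _ hs h5
  have h7 := congrArg (fun z => ⟪z, ν⟫) h6
  simp only [inner_sub_left, real_inner_smul_left, hy] at h7
  have hων : ⟪ω, ν⟫ ≠ 0 := by rwa [real_inner_comm]
  have h8 : ⟪y, ω⟫ = ⟪ybar, ω⟫ := mul_right_cancel₀ hων (sub_right_injective h7)
  rw [h8] at h6
  exact ⟨sub_left_injective h6, rfl, rfl⟩
end

section
/- Let n, k ≥ 1 with k ≤ n, write x = (x′, x″) ∈ ℝ^k × ℝ^{n−k}, let −k < μ < 0, and let a : ℝⁿ × ℝ^k → ℂ be smooth and satisfy, for every multi-index α, a bound |∂_θ^α a(x,θ)| ≤ C_α ⟨θ⟩^{μ−|α|} for all (x,θ), where ⟨θ⟩ := (1+|θ|²)^{1/2}. Let χ ∈ C_c^∞(ℝ^k) equal 1 on a neighborhood of 0. Then there is a constant C such that for all x with 0 < |x′| ≤ 1 and all ε ∈ (0,1], |∫_{ℝ^k} e^{i x′·θ} a(x,θ) χ(εθ) dθ| ≤ C |x′|^{−k−μ}. -/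
open MeasureTheory
open scoped RealInnerProductSpace

/-- The Japanese bracket `⟨θ⟩ = (1 + |θ|²)^{1/2}`. -/
noncomputable def jap {k : ℕ} (θ : EuclideanSpace ℝ (Fin k)) : ℝ :=
  Real.sqrt (1 + ‖θ‖ ^ 2)

open scoped ContDiff


/-- Homogeneous symbol bounds away from the origin. -/
def HB {k : ℕ} (f : (EuclideanSpace ℝ (Fin k)) → ℂ) (s : ℝ) (A : ℕ → ℝ) : Prop :=
  ∀ (m : ℕ) (η : EuclideanSpace ℝ (Fin k)), η ≠ 0 → ‖iteratedFDeriv ℝ m f η‖ ≤ A m * ‖η‖ ^ (s - (m : ℝ))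

lemma HB.mul {k : ℕ} {f g : (EuclideanSpace ℝ (Fin k)) → ℂ} {s t : ℝ} {A B : ℕ → ℝ}
    (hf : HB f s A) (hg : HB g t B) (hfs : ContDiff ℝ ∞ f) (hgs : ContDiff ℝ ∞ g) :
    HB (fun η => f η * g η) (s + t)
      (fun m => ∑ i ∈ Finset.range (m + 1), (m.choose i : ℝ) * A i * B (m - i)) := by
  intro m η hη
  refine (norm_iteratedFDeriv_mul_le hfs hgs η (n := m) (by exact_mod_cast le_top)).trans ?_
  rw [Finset.sum_mul]
  refine Finset.sum_le_sum fun i hi => ?_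
  have him : i ≤ m := Nat.lt_succ_iff.1 (Finset.mem_range.1 hi)
  have hpos : 0 < ‖η‖ := norm_pos_iff.2 hη
  have h1 := hf i η hη
  have h2 := hg (m - i) η hη
  have h3 : ‖η‖ ^ (s + t - (m : ℝ)) = ‖η‖ ^ (s - (i : ℝ)) * ‖η‖ ^ (t - ((m - i : ℕ) : ℝ)) := by
    rw [← Real.rpow_add hpos]
    congr 1
    push_cast [Nat.cast_sub him]
    ring
  have h4 := mul_le_mul h1 h2 (norm_nonneg _) ((norm_nonneg _).trans h1)
  calc _ = (m.choose i : ℝ) * (‖iteratedFDeriv ℝ i f η‖ * ‖iteratedFDeriv ℝ (m - i) g η‖) := by ring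
    _ ≤ _ := mul_le_mul_of_nonneg_left h4 (Nat.cast_nonneg _)
    _ = _ := by rw [h3]; ring

lemma HB.scale {k : ℕ} {f : (EuclideanSpace ℝ (Fin k)) → ℂ} {s : ℝ} {A : ℕ → ℝ}
    (hf : HB f s A) (hfs : ContDiff ℝ ∞ f) {c : ℝ} (hc : 0 < c) :
    HB (fun η => f (c • η)) s (fun m => c ^ s * A m) := by
  intro m η hη
  have hpos : 0 < ‖η‖ := norm_pos_iff.2 hη
  rw [iteratedFDeriv_comp_const_smul (i := m) c (hfs.of_le (by exact_mod_cast le_top))]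
  have h1 := hf m (c • η) (smul_ne_zero hc.ne' hη)
  simp only [norm_smul, norm_pow, Real.norm_eq_abs, abs_of_pos hc] at h1 ⊢
  rw [Real.mul_rpow hc.le hpos.le, Real.rpow_sub hc, Real.rpow_natCast] at h1
  calc _ ≤ c ^ m * (A m * (c ^ s / c ^ m * ‖η‖ ^ (s - (m : ℝ)))) :=
        mul_le_mul_of_nonneg_left h1 (by positivity)
    _ = _ := by field_simp

lemma HB.of_compact {k : ℕ} {f : (EuclideanSpace ℝ (Fin k)) → ℂ} (hfs : ContDiff ℝ ∞ f) (hc : HasCompactSupport f) :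
    ∃ A : ℕ → ℝ, HB f 0 A := by
  have h := fun m => (hc.toSchwartzMap hfs).decay' m m
  choose A hA using h
  refine ⟨A, fun m η hη => ?_⟩
  have hpos : 0 < ‖η‖ := norm_pos_iff.2 hη
  have h1 : ‖η‖ ^ m * ‖iteratedFDeriv ℝ m f η‖ ≤ A m := hA m η
  rw [zero_sub, Real.rpow_neg hpos.le, Real.rpow_natCast, ← div_eq_mul_inv, le_div_iff₀ (by positivity)]
  linarith

lemma HB.one_sub {k : ℕ} {f : (EuclideanSpace ℝ (Fin k)) → ℂ} {A : ℕ → ℝ} (hfs : ContDiff ℝ ∞ f) (hf : HB f 0 A) :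
    HB (fun η => 1 - f η) 0 (fun m => 1 + A m) := by
  intro m η hη
  have hpos : 0 < ‖η‖ := norm_pos_iff.2 hη
  have h1 : ‖iteratedFDeriv ℝ m (fun _ : EuclideanSpace ℝ (Fin k) => (1 : ℂ)) η‖ ≤ ‖η‖ ^ ((0 : ℝ) - m) := by
    rcases Nat.eq_zero_or_pos m with rfl | hm
    · simp
    · rw [iteratedFDeriv_const_of_ne hm.ne']
      simp only [Pi.zero_apply, norm_zero]
      positivity
  have h2 : iteratedFDeriv ℝ m (fun η => 1 - f η) η
      = iteratedFDeriv ℝ m (fun _ : EuclideanSpace ℝ (Fin k) => (1 : ℂ)) η - iteratedFDeriv ℝ m f η := by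
    have := iteratedFDeriv_sub_apply (𝕜 := ℝ) (i := m) (f := fun _ : EuclideanSpace ℝ (Fin k) => (1 : ℂ)) (g := f) (x := η)
      contDiffAt_const ((hfs.of_le (by exact_mod_cast le_top)).contDiffAt)
    exact this
  rw [h2]
  refine (norm_sub_le _ _).trans ?_
  have := hf m η hη
  linarith [add_mul 1 (A m) (‖η‖ ^ ((0 : ℝ) - m))]

lemma norm_osc {k : ℕ} (w η : EuclideanSpace ℝ (Fin k)) : ‖Complex.exp (Complex.I * ((inner ℝ w η : ℝ) : ℂ))‖ = 1 := by
  rw [mul_comm]; exact Complex.norm_exp_ofReal_mul_I _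

lemma smooth_osc {k : ℕ} (w : EuclideanSpace ℝ (Fin k)) :
    ContDiff ℝ ∞ (fun η : EuclideanSpace ℝ (Fin k) => Complex.exp (Complex.I * ((inner ℝ w η : ℝ) : ℂ))) := by
  have : ContDiff ℝ ∞ (fun η : EuclideanSpace ℝ (Fin k) => ((inner ℝ w η : ℝ) : ℂ)) :=
    Complex.ofRealCLM.contDiff.comp (innerSL ℝ w).contDiff
  exact (contDiff_const.mul this).cexp

lemma fderiv_osc {k : ℕ} (w η : EuclideanSpace ℝ (Fin k)) (hw : ‖w‖ = 1) :
    fderiv ℝ (fun η : EuclideanSpace ℝ (Fin k) => Complex.exp (Complex.I * ((inner ℝ w η : ℝ) : ℂ))) η w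
      = Complex.I * Complex.exp (Complex.I * ((inner ℝ w η : ℝ) : ℂ)) := by
  have h1 : HasFDerivAt (fun η : EuclideanSpace ℝ (Fin k) => ((inner ℝ w η : ℝ) : ℂ))
      (Complex.ofRealCLM.comp (innerSL ℝ w)) η :=
    (Complex.ofRealCLM.comp (innerSL ℝ w)).hasFDerivAt
  have h2 := (h1.const_mul Complex.I).cexp
  rw [h2.fderiv]
  simp [hw, mul_comm]

/-- Repeated integration by parts. -/
lemma osc_ibp {k : ℕ} (w : EuclideanSpace ℝ (Fin k)) (hw : ‖w‖ = 1) (m : ℕ) : ∀ (g : (EuclideanSpace ℝ (Fin k)) → ℂ),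
    ContDiff ℝ ∞ g → HasCompactSupport g →
    ‖∫ η : EuclideanSpace ℝ (Fin k), Complex.exp (Complex.I * ((inner ℝ w η : ℝ) : ℂ)) * g η‖
      ≤ ∫ η : EuclideanSpace ℝ (Fin k), ‖iteratedFDeriv ℝ m g η‖ := by
  induction m with
  | zero =>
    intro g hg hc
    refine (norm_integral_le_integral_norm _).trans (le_of_eq ?_)
    congr 1
    ext η
    rw [norm_mul, norm_osc, one_mul, norm_iteratedFDeriv_zero]
  | succ m ih =>
    intro g hg hc
    have hfd : ContDiff ℝ ∞ (fderiv ℝ g) := hg.fderiv_right (by simp)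
    have hh : ContDiff ℝ ∞ (fun η => fderiv ℝ g η w) := hfd.clm_apply contDiff_const
    have hhc : HasCompactSupport (fun η => fderiv ℝ g η w) := hc.fderiv_apply ℝ w
    have hes := smooth_osc w
    set e : (EuclideanSpace ℝ (Fin k)) → ℂ := fun η => Complex.exp (Complex.I * ((inner ℝ w η : ℝ) : ℂ)) with he
    have hfde : ∀ η, fderiv ℝ e η w = Complex.I * e η := fun η => fderiv_osc w η hw
    have i1 : Integrable (fun η => e η * g η) :=
      (hes.continuous.mul hg.continuous).integrable_of_hasCompactSupport hc.mul_left
    have i2 : Integrable (fun η => e η * fderiv ℝ g η w) :=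
      (hes.continuous.mul hh.continuous).integrable_of_hasCompactSupport hhc.mul_left
    have key := integral_mul_fderiv_eq_neg_fderiv_mul_of_integrable (μ := volume)
      (f := e) (g := g) (v := w)
      (by simp only [hfde, mul_assoc]; exact i1.const_mul _) i2 i1
      (fun x _ => (hes.differentiable (by simp)) x) (fun x _ => (hg.differentiable (by simp)) x)
    have h1 := ih _ hh hhc
    have h2 : ‖∫ η : EuclideanSpace ℝ (Fin k), e η * g η‖ = ‖∫ η : EuclideanSpace ℝ (Fin k), e η * fderiv ℝ g η w‖ := by
      rw [key]
      simp only [hfde, mul_assoc]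
      rw [integral_const_mul, norm_neg, norm_mul, Complex.norm_I, one_mul]
    calc _ = ‖∫ η : EuclideanSpace ℝ (Fin k), e η * fderiv ℝ g η w‖ := h2
      _ ≤ _ := h1
      _ ≤ _ := by
        refine integral_mono ?_ ?_ fun η => ?_
        · exact ((hh.of_le (by exact_mod_cast le_top)).continuous_iteratedFDeriv'.norm).integrable_of_hasCompactSupport
            (hhc.iteratedFDeriv m).norm
        · exact ((hg.of_le (by exact_mod_cast le_top)).continuous_iteratedFDeriv'.norm).integrable_of_hasCompactSupport
            (hc.iteratedFDeriv (m + 1)).norm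
        · have := norm_iteratedFDeriv_clm_apply_const (𝕜 := ℝ) (f := fderiv ℝ g) (c := w) (x := η) (n := m)
            hfd.contDiffAt (by exact_mod_cast le_top)
          rwa [hw, one_mul, norm_iteratedFDeriv_fderiv] at this

lemma core {k : ℕ} (hk : 1 ≤ k) (μ : ℝ) (hμ₁ : -(k : ℝ) < μ) (hμ₂ : μ < 0) (A : ℕ → ℝ) :
    ∃ K : ℝ, ∀ (w : EuclideanSpace ℝ (Fin k)) (t : ℝ) (G : (EuclideanSpace ℝ (Fin k)) → ℂ), ‖w‖ = 1 → ContDiff ℝ ∞ G →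
      HasCompactSupport G → HB G μ (fun m => t * A m) →
      ‖∫ η : EuclideanSpace ℝ (Fin k), Complex.exp (Complex.I * ((inner ℝ w η : ℝ) : ℂ)) * G η‖ ≤ K * t := by
  let ψ : ContDiffBump (0 : EuclideanSpace ℝ (Fin k)) := ⟨1, 2, one_pos, one_lt_two⟩
  let p : (EuclideanSpace ℝ (Fin k)) → ℂ := fun η => (ψ η : ℂ)
  have hps : ContDiff ℝ ∞ p := Complex.ofRealCLM.contDiff.comp ψ.contDiff
  have hpc : HasCompactSupport p := ψ.hasCompactSupport.comp_left (g := fun x : ℝ => (x : ℂ)) (by simp)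
  obtain ⟨B, hB⟩ := HB.of_compact hps hpc
  have hB1 := HB.one_sub hps hB
  have hqs : ContDiff ℝ ∞ (fun η => 1 - p η) := contDiff_const.sub hps
  have : Nonempty (Fin k) := ⟨⟨0, hk⟩⟩
  have hne : ∀ᵐ η : EuclideanSpace ℝ (Fin k), η ≠ 0 := by
    rw [ae_iff]; simp
  let S : ℝ := ∑ i ∈ Finset.range (k + 1), (k.choose i : ℝ) * (1 + B i) * A (k - i)
  have hJ : Integrable (fun η : EuclideanSpace ℝ (Fin k) => (1 + ‖η‖) ^ (-((k : ℝ) - μ))) :=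
    integrable_one_add_norm (by simp; linarith)
  have hI : IntegrableOn (fun η : EuclideanSpace ℝ (Fin k) => ‖η‖ ^ μ) (Metric.ball 0 2) := by
    refine integrableOn_ball_of_norm_le_rpow (C := 1) (α := -μ) (by simpa using hk) (by simp; linarith) ?_ ?_
    · refine Filter.Eventually.of_forall fun η => ?_
      rw [neg_neg, one_mul, Real.norm_of_nonneg (by positivity)]
    · exact (Measurable.aestronglyMeasurable (by fun_prop))
  refine ⟨A 0 * (∫ η in Metric.ball (0 : EuclideanSpace ℝ (Fin k)) 2, ‖η‖ ^ μ)
    + S * (2 ^ ((k : ℝ) - μ) * ∫ η : EuclideanSpace ℝ (Fin k), (1 + ‖η‖) ^ (-((k : ℝ) - μ))), ?_⟩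
  intro w t G hw hGs hGc hG
  have hes := smooth_osc w
  have hen := norm_osc w
  have hibp := osc_ibp w hw k
  set e : (EuclideanSpace ℝ (Fin k)) → ℂ := fun η => Complex.exp (Complex.I * ((inner ℝ w η : ℝ) : ℂ)) with he
  have i1 : Integrable (fun η => e η * (p η * G η)) :=
    (hes.continuous.mul (hps.continuous.mul hGs.continuous)).integrable_of_hasCompactSupport
      hGc.mul_left.mul_left
  have i2 : Integrable (fun η => e η * ((1 - p η) * G η)) :=
    (hes.continuous.mul (hqs.continuous.mul hGs.continuous)).integrable_of_hasCompactSupport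
      hGc.mul_left.mul_left
  have hsplit : ∫ η, e η * G η = (∫ η, e η * (p η * G η)) + ∫ η, e η * ((1 - p η) * G η) := by
    rw [← integral_add i1 i2]
    congr 1; ext η; ring
  have b1 : ‖∫ η, e η * (p η * G η)‖ ≤ (t * A 0) * ∫ η in Metric.ball (0 : EuclideanSpace ℝ (Fin k)) 2, ‖η‖ ^ μ := by
    have hz : ∫ η, e η * (p η * G η) = ∫ η in Metric.ball (0 : EuclideanSpace ℝ (Fin k)) 2, e η * (p η * G η) := by
      symm
      refine setIntegral_eq_integral_of_forall_compl_eq_zero fun η hη => ?_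
      have : ψ η = 0 := ψ.zero_of_le_dist (by simpa using hη)
      simp [p, this]
    rw [hz, ← integral_const_mul]
    refine norm_integral_le_of_norm_le (hI.const_mul _) (ae_restrict_of_ae ?_)
    filter_upwards [hne] with η hη
    have h0 := hG 0 η hη
    rw [norm_iteratedFDeriv_zero] at h0
    simp only [Nat.cast_zero, sub_zero] at h0
    have hp1 : ‖p η‖ ≤ 1 := by
      simp only [p, Complex.norm_real, Real.norm_of_nonneg ψ.nonneg]
      exact ψ.le_one
    rw [norm_mul, norm_mul]
    have : ‖e η‖ = 1 := hen η
    rw [this, one_mul]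
    calc _ ≤ 1 * ‖G η‖ := mul_le_mul_of_nonneg_right hp1 (norm_nonneg _)
      _ ≤ _ := by rw [one_mul]; exact h0
  have b2 : ‖∫ η, e η * ((1 - p η) * G η)‖
      ≤ (t * S) * (2 ^ ((k : ℝ) - μ) * ∫ η : EuclideanSpace ℝ (Fin k), (1 + ‖η‖) ^ (-((k : ℝ) - μ))) := by
    refine (hibp _ (hqs.mul hGs) hGc.mul_left).trans ?_
    rw [← integral_const_mul, ← integral_const_mul]
    have hm := hB1.mul hG hqs hGs k
    have hsum : ∑ i ∈ Finset.range (k + 1), (k.choose i : ℝ) * (1 + B i) * (t * A (k - i)) = t * S := by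
      simp only [S, Finset.mul_sum]
      refine Finset.sum_congr rfl fun i _ => by ring
    simp only [hsum, zero_add] at hm
    have htS : 0 ≤ t * S := by
      have hv : (EuclideanSpace.single (⟨0, hk⟩ : Fin k) (1 : ℝ)) ≠ 0 := by simp
      have h1 := (norm_nonneg _).trans (hm _ hv)
      have h2 : ‖(EuclideanSpace.single (⟨0, hk⟩ : Fin k) (1 : ℝ))‖ = 1 := by simp
      rw [h2, Real.one_rpow, mul_one] at h1
      exact h1
    refine integral_mono ?_ ((hJ.const_mul _).const_mul _) fun η => ?_
    · exact (((hqs.mul hGs).of_le (by exact_mod_cast le_top)).continuous_iteratedFDeriv'.norm).integrable_of_hasCompactSupport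
        (hGc.mul_left.iteratedFDeriv k).norm
    · rcases lt_or_ge ‖η‖ 1 with hlt | hge
      · have hev : (fun η => (1 - p η) * G η) =ᶠ[nhds η] fun _ => 0 := by
          filter_upwards [Metric.isOpen_ball.mem_nhds (show η ∈ Metric.ball (0 : EuclideanSpace ℝ (Fin k)) 1 by simpa using hlt)] with y hy
          have : ψ y = 1 := ψ.one_of_mem_closedBall (Metric.ball_subset_closedBall hy)
          simp [p, this]
        have := (hev.iteratedFDeriv ℝ k).eq_of_nhds
        simp only [this]
        have hz : iteratedFDeriv ℝ k (fun _ : EuclideanSpace ℝ (Fin k) => (0 : ℂ)) η = 0 := by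
          have := iteratedFDeriv_fun_zero (𝕜 := ℝ) (E := EuclideanSpace ℝ (Fin k)) (F := ℂ) (n := k)
          exact congrFun this η
        rw [hz, norm_zero]
        positivity
      · have hη : η ≠ 0 := by
          intro h; rw [h, norm_zero] at hge; linarith
        refine (hm η hη).trans (mul_le_mul_of_nonneg_left ?_ htS)
        have hpos : 0 < ‖η‖ := by linarith
        have e1 : (2 * ‖η‖) ^ (-((k : ℝ) - μ)) ≤ (1 + ‖η‖) ^ (-((k : ℝ) - μ)) :=
          Real.rpow_le_rpow_of_nonpos (by linarith) (by linarith) (by linarith)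
        calc ‖η‖ ^ (μ - (k : ℝ)) = 2 ^ ((k : ℝ) - μ) * (2 * ‖η‖) ^ (-((k : ℝ) - μ)) := by
              rw [Real.mul_rpow (by norm_num) hpos.le, ← mul_assoc, ← Real.rpow_add (by norm_num)]
              simp
          _ ≤ _ := mul_le_mul_of_nonneg_left e1 (by positivity)
  rw [hsplit]
  refine (norm_add_le _ _).trans ((add_le_add b1 b2).trans (le_of_eq (by ring)))

/-- Blow-up rate of a conormal distribution of order `−k < μ < 0`:
the regularized oscillatory integrals are `O(|x′|^{−k−μ})` uniformly in `ε`. -/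
theorem stmt9 (n k : ℕ) (hk : 1 ≤ k) (hkn : k ≤ n) (μ : ℝ)
    (hμ₁ : -(k : ℝ) < μ) (hμ₂ : μ < 0)
    (a : EuclideanSpace ℝ (Fin k) → EuclideanSpace ℝ (Fin (n - k)) →
      EuclideanSpace ℝ (Fin k) → ℂ)
    (ha_smooth : ContDiff ℝ (⊤ : ℕ∞)
      (fun p : EuclideanSpace ℝ (Fin k) × EuclideanSpace ℝ (Fin (n - k)) ×
          EuclideanSpace ℝ (Fin k) => a p.1 p.2.1 p.2.2))
    (ha : ∀ mα : ℕ, ∃ C : ℝ, ∀ x' x'' θ,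
      ‖iteratedFDeriv ℝ mα (fun θ => a x' x'' θ) θ‖ ≤ C * jap θ ^ (μ - (mα : ℝ)))
    (χ : EuclideanSpace ℝ (Fin k) → ℝ)
    (hχ_smooth : ContDiff ℝ (⊤ : ℕ∞) χ) (hχ_supp : HasCompactSupport χ)
    (hχ_one : ∀ᶠ θ in nhds 0, χ θ = 1) :
    ∃ C : ℝ, ∀ (x' : EuclideanSpace ℝ (Fin k)) (x'' : EuclideanSpace ℝ (Fin (n - k)))
      (ε : ℝ), 0 < ‖x'‖ → ‖x'‖ ≤ 1 → 0 < ε → ε ≤ 1 →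
      ‖∫ θ : EuclideanSpace ℝ (Fin k),
          Complex.exp (Complex.I * (⟪x', θ⟫ : ℂ)) * a x' x'' θ * (χ (ε • θ) : ℂ)‖ ≤
        C * ‖x'‖ ^ (-(k : ℝ) - μ) := by

  choose Ca hCa using ha
  let q : (EuclideanSpace ℝ (Fin k)) → ℂ := fun η => (χ η : ℂ)
  have hqs : ContDiff ℝ ∞ q := Complex.ofRealCLM.contDiff.comp hχ_smooth
  have hqc : HasCompactSupport q := hχ_supp.comp_left (g := fun x : ℝ => (x : ℂ)) (by simp)
  obtain ⟨B, hB⟩ := HB.of_compact hqs hqc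
  obtain ⟨K, hK⟩ := core hk μ hμ₁ hμ₂
    (fun m => ∑ i ∈ Finset.range (m + 1), (m.choose i : ℝ) * Ca i * B (m - i))
  refine ⟨K, fun x' x'' ε hr _ hε _ => ?_⟩
  have has : ContDiff ℝ ∞ (fun θ => a x' x'' θ) :=
    ha_smooth.comp (contDiff_const.prodMk (contDiff_const.prodMk contDiff_id))
  have hCa0 : ∀ m, 0 ≤ Ca m := by
    intro m
    have h1 := (norm_nonneg _).trans (hCa m 0 0 0)
    simpa [jap] using h1
  have haB : HB (fun θ => a x' x'' θ) μ Ca := by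
    intro m η hη
    refine (hCa m x' x'' η).trans (mul_le_mul_of_nonneg_left ?_ (hCa0 m))
    refine Real.rpow_le_rpow_of_nonpos (norm_pos_iff.2 hη) ?_ ?_
    · exact Real.le_sqrt_of_sq_le (by linarith)
    · have : (0 : ℝ) ≤ m := Nat.cast_nonneg m
      linarith
  have hqε := hB.scale hqs hε
  simp only [Real.rpow_zero, one_mul] at hqε
  have hqεs : ContDiff ℝ ∞ (fun θ : EuclideanSpace ℝ (Fin k) => q (ε • θ)) := hqs.comp (contDiff_const_smul ε)
  have hqεc : HasCompactSupport (fun θ : EuclideanSpace ℝ (Fin k) => q (ε • θ)) := hqc.comp_smul hε.ne'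
  have hf := haB.mul hqε has hqεs
  rw [add_zero] at hf
  have hfs := has.mul hqεs
  have hfc : HasCompactSupport (fun θ => a x' x'' θ * q (ε • θ)) := hqεc.mul_left
  set r := ‖x'‖ with hrdef
  have hri : 0 < r⁻¹ := inv_pos.2 hr
  have hF := hf.scale hfs hri
  have hFs : ContDiff ℝ ∞ (fun η : EuclideanSpace ℝ (Fin k) => a x' x'' (r⁻¹ • η) * q (ε • r⁻¹ • η)) :=
    hfs.comp (contDiff_const_smul r⁻¹)
  have hFc : HasCompactSupport (fun η : EuclideanSpace ℝ (Fin k) => a x' x'' (r⁻¹ • η) * q (ε • r⁻¹ • η)) :=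
    hfc.comp_smul hri.ne'
  have hw : ‖r⁻¹ • x'‖ = 1 := by
    rw [norm_smul, Real.norm_of_nonneg hri.le, ← hrdef, inv_mul_cancel₀ hr.ne']
  have hmain := hK (r⁻¹ • x') (r⁻¹ ^ μ) _ hw hFs hFc hF
  have hcv := Measure.integral_comp_inv_smul_of_nonneg (volume : Measure (EuclideanSpace ℝ (Fin k)))
    (fun θ => Complex.exp (Complex.I * ((inner ℝ x' θ : ℝ) : ℂ)) * (a x' x'' θ * q (ε • θ))) hr.le
  simp only [real_inner_smul_left] at hmain
  simp only [real_inner_smul_right, finrank_euclideanSpace, Fintype.card_fin] at hcv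
  rw [hcv, norm_smul, Real.norm_of_nonneg (by positivity)] at hmain
  simp only [mul_assoc]
  change ‖∫ θ : EuclideanSpace ℝ (Fin k), Complex.exp (Complex.I * ((inner ℝ x' θ : ℝ) : ℂ)) * (a x' x'' θ * q (ε • θ))‖ ≤ _
  have hpw : r ^ (-(k : ℝ) - μ) = r⁻¹ ^ μ / r ^ k := by
    rw [Real.rpow_sub hr, Real.rpow_neg hr.le, Real.rpow_natCast, Real.inv_rpow hr.le]
    field_simp
  rw [hpw, ← mul_div_assoc, le_div_iff₀ (by positivity), mul_comm]
  exact hmain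
end
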